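/- Let x and y be two distinct nonzero vectors of (ZMod 2)^n and let d ≥ 2. Then the number of d-dimensional subspaces of (ZMod 2)^n that contain both x and y is at most (2^n choose d − 2), and hence at most (2^n)^{d−2}. -/

import Mathlib

/-- The vector space of `n`-dimensional vectors over the field with two elements. -/
abbrev BV (n : ℕ) := Fin n → ZMod 2

lemma flats_aux (n d : ℕ) (x y : BV n)
    (hx : x ≠ 0) (hy : y ≠ 0) (hxy : x ≠ y) (F : Submodule (ZMod 2) (BV n))
    (hF : Module.finrank (ZMod 2) F = d) (hxF : x ∈ F) (hyF : y ∈ F) :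
    ∃ S : Finset (BV n), S.card = d - 2 ∧
      Submodule.span (ZMod 2) (({x, y} ∪ S : Finset (BV n)) : Set (BV n)) = F := by
  classical
  have hli : LinearIndepOn (ZMod 2) id ({x, y} : Set (BV n)) := by
    apply linearIndepOn_id_pair hx
    intro a
    have : a = 0 ∨ a = 1 := by revert a; decide
    rcases this with rfl | rfl
    · simpa using hy.symm
    · simpa using hxy
  have hsub : ({x, y} : Set (BV n)) ⊆ F := by
    rintro z (rfl | rfl) <;> assumption
  obtain ⟨b, hbF, hb, hsp, hbi⟩ := exists_linearIndepOn_id_extension hli hsub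
  have hspan : Submodule.span (ZMod 2) b = F :=
    le_antisymm (Submodule.span_le.2 hbF) hsp
  have hcard : b.toFinset.card = d := by
    rw [← hF, ← hspan]
    exact (finrank_span_set_eq_card hbi).symm
  have hs : ({x, y} : Finset (BV n)) ⊆ b.toFinset := by
    intro z hz
    rw [Set.mem_toFinset]
    exact hb (by simpa using hz)
  refine ⟨b.toFinset \ {x, y}, ?_, ?_⟩
  · rw [Finset.card_sdiff_of_subset hs, hcard, Finset.card_pair hxy]
  · rw [Finset.union_sdiff_of_subset hs, Set.coe_toFinset, hspan]

/-- For distinct nonzero vectors `x, y` of `(ZMod 2)^n` and `d ≥ 2`, the number of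
`d`-dimensional subspaces containing both `x` and `y` is at most
`(2^n choose d − 2)`, and hence at most `(2^n)^{d−2}`. -/
theorem flats_through_pair_bound (n d : ℕ) (hd : 2 ≤ d) (x y : BV n)
    (hx : x ≠ 0) (hy : y ≠ 0) (hxy : x ≠ y) :
    Nat.card {F : Submodule (ZMod 2) (BV n) //
        Module.finrank (ZMod 2) F = d ∧ x ∈ F ∧ y ∈ F} ≤
      Nat.choose (2 ^ n) (d - 2) ∧
    Nat.card {F : Submodule (ZMod 2) (BV n) //
        Module.finrank (ZMod 2) F = d ∧ x ∈ F ∧ y ∈ F} ≤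
      (2 ^ n) ^ (d - 2) := by
  have key : Nat.card {F : Submodule (ZMod 2) (BV n) //
        Module.finrank (ZMod 2) F = d ∧ x ∈ F ∧ y ∈ F} ≤
      Nat.choose (2 ^ n) (d - 2) := by
    choose S hS hsp using fun F : {F : Submodule (ZMod 2) (BV n) //
        Module.finrank (ZMod 2) F = d ∧ x ∈ F ∧ y ∈ F} =>
      flats_aux n d x y hx hy hxy F.1 F.2.1 F.2.2.1 F.2.2.2
    have hinj : Function.Injective (fun F => (⟨S F, hS F⟩ :
        {s : Finset (BV n) // s.card = d - 2})) := by
      intro F G h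
      have h' : S F = S G := congrArg Subtype.val h
      apply Subtype.ext
      rw [← hsp F, ← hsp G, h']
    refine (Nat.card_le_card_of_injective _ hinj).trans (le_of_eq ?_)
    rw [Nat.card_eq_fintype_card, Fintype.card_finset_len]
    simp [ZMod.card]
  exact ⟨key, key.trans (Nat.choose_le_pow _ _)⟩
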